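/- Let Ω ⊂ ℝ² be open and connected, and let A : Ω → ℝ² be a C¹ vector field with rot A = 0 on Ω. Suppose that for every closed piecewise-C¹ loop γ : [0,1] → Ω with γ(0) = γ(1), the circulation ∫₀¹ A(γ(t))·γ'(t) dt belongs to πℤ. Then there exists a C¹ function σ : Ω → ℂ such that |σ(x)| = 1 for all x ∈ Ω and ∂_j σ = 2iσA_j on Ω for j = 1,2. (This is the single-valued function e^{iφ} associated with the multivalued phase φ satisfying dφ = 2ω_A; the circulation hypothesis holds in particular when H_e vanishes on closure(Ω) and the flux of H_e through each hole of Ω lies in 2π(ℤ + 1/2).) -/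

import Mathlib

open MeasureTheory Complex Set

noncomputable section

abbrev Pt : Type := ℝ × ℝ

/-- First partial derivative `∂₁ f` of a function on `ℝ²`. -/
def pd1 {E : Type*} [NormedAddCommGroup E] [NormedSpace ℝ E] (f : Pt → E) (x : Pt) : E :=
  fderiv ℝ f x (1, 0)

/-- Second partial derivative `∂₂ f` of a function on `ℝ²`. -/
def pd2 {E : Type*} [NormedAddCommGroup E] [NormedSpace ℝ E] (f : Pt → E) (x : Pt) : E :=
  fderiv ℝ f x (0, 1)

/-- `rot A = ∂₁ A₂ - ∂₂ A₁`. -/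
def rot2 (A : Pt → Pt) (x : Pt) : ℝ :=
  pd1 (fun y => (A y).2) x - pd2 (fun y => (A y).1) x

/-- `div A = ∂₁ A₁ + ∂₂ A₂`. -/
def div2 (A : Pt → Pt) (x : Pt) : ℝ :=
  pd1 (fun y => (A y).1) x + pd2 (fun y => (A y).2) x

/-- Squared Euclidean norm of the magnetic gradient `∇u - iAu`. -/
def mgradSq (A : Pt → Pt) (u : Pt → ℂ) (x : Pt) : ℝ :=
  ‖pd1 u x - Complex.I * ((A x).1 : ℂ) * u x‖ ^ 2 +
    ‖pd2 u x - Complex.I * ((A x).2 : ℂ) * u x‖ ^ 2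

/-- `γ : [0,1] → Ω` is a closed piecewise-`C¹` loop contained in `Ω`. -/
def IsPiecewiseC1LoopIn (Ω : Set Pt) (γ : ℝ → Pt) : Prop :=
  ContinuousOn γ (Set.Icc 0 1) ∧ γ 0 = γ 1 ∧ (∀ t ∈ Set.Icc (0 : ℝ) 1, γ t ∈ Ω) ∧
    ∃ (n : ℕ) (t : Fin (n + 1) → ℝ), StrictMono t ∧ t 0 = 0 ∧ t (Fin.last n) = 1 ∧
      ∀ i : Fin n, ContDiffOn ℝ 1 γ (Set.Icc (t i.castSucc) (t i.succ))

/-- The circulation `∫₀¹ A(γ(t)) · γ'(t) dt` of the vector field `A` along the loop `γ`. -/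
def circulation (A : Pt → Pt) (γ : ℝ → Pt) : ℝ :=
  ∫ t in (0 : ℝ)..1, ((A (γ t)).1 * (deriv γ t).1 + (A (γ t)).2 * (deriv γ t).2)




/-- The 1-form associated with the vector field `A`. -/
def formOf (A : Pt → Pt) (x : Pt) : Pt →L[ℝ] ℝ :=
  (A x).1 • ContinuousLinearMap.fst ℝ ℝ ℝ + (A x).2 • ContinuousLinearMap.snd ℝ ℝ ℝ

/-- Integral of `A` along the segment from `x` to `y`. -/
def segI (A : Pt → Pt) (x y : Pt) : ℝ := curveIntegral (formOf A) (Path.segment x y)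

/-- Polygonal chains in `Ω` starting at `x`, with their circulation. -/
inductive PChain (Ω : Set Pt) (A : Pt → Pt) (x : Pt) : Pt → ℝ → Prop
  | nil : PChain Ω A x x 0
  | snoc {y z : Pt} {s : ℝ} : PChain Ω A x y s → segment ℝ y z ⊆ Ω →
      PChain Ω A x z (s + segI A y z)

theorem segI_eq (A : Pt → Pt) (x y : Pt) : segI A x y =
    ∫ t in (0:ℝ)..1, formOf A (AffineMap.lineMap x y t) (y - x) := curveIntegral_segment _ _ _

theorem segI_symm (A : Pt → Pt) (x y : Pt) : segI A y x = - segI A x y := by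
  unfold segI
  rw [← curveIntegral_symm, Path.segment_symm]

theorem PChain.trans {Ω : Set Pt} {A : Pt → Pt} {x y z : Pt} {s t : ℝ}
    (h : PChain Ω A x y s) (h' : PChain Ω A y z t) : PChain Ω A x z (s + t) := by
  induction h' with
  | nil => simpa using h
  | snoc _ hseg ih => rw [← add_assoc]; exact ih.snoc hseg

theorem PChain.symm {Ω : Set Pt} {A : Pt → Pt} {x y : Pt} {s : ℝ}
    (h : PChain Ω A x y s) : PChain Ω A y x (-s) := by
  induction h with
  | nil => simpa using PChain.nil
  | @snoc y z s _ hseg ih =>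
    have h1 : PChain Ω A z y (0 + segI A z y) := PChain.nil.snoc (by rwa [segment_symm])
    rw [segI_symm] at h1
    have := h1.trans ih
    convert this using 1
    ring

theorem PChain.exists_seq {Ω : Set Pt} {A : Pt → Pt} {x y : Pt} {s : ℝ}
    (h : PChain Ω A x y s) : ∃ (n : ℕ) (p : ℕ → Pt), p 0 = x ∧ p n = y ∧
      (∀ i < n, segment ℝ (p i) (p (i+1)) ⊆ Ω) ∧
      s = ∑ i ∈ Finset.range n, segI A (p i) (p (i+1)) := by
  induction h with
  | nil => exact ⟨0, fun _ => x, rfl, rfl, by simp, by simp⟩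
  | @snoc y z s _ hseg ih =>
    obtain ⟨n, p, h0, hn, hs, hsum⟩ := ih
    refine ⟨n+1, fun i => if i ≤ n then p i else z, by simpa using h0, by simp, ?_, ?_⟩
    · intro i hi
      rcases Nat.lt_succ_iff_lt_or_eq.1 hi with h | rfl
      · simpa [h.le, Nat.succ_le_of_lt h] using hs i h
      · simpa [hn] using hseg
    · rw [Finset.sum_range_succ, hsum]
      congr 1
      · apply Finset.sum_congr rfl
        intro i hi
        have h := Finset.mem_range.1 hi
        simp [h.le, Nat.succ_le_of_lt h]
      · simp [hn]

/-- Polygonal curve through `p 0, …, p n`, parametrised by `[0,1]`. -/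
def polyCurve (n : ℕ) (p : ℕ → Pt) (t : ℝ) : Pt :=
  p 0 + ∑ i ∈ Finset.range n, (max 0 (min 1 ((n:ℝ) * t - i))) • (p (i+1) - p i)

theorem polyCurve_continuous (n : ℕ) (p : ℕ → Pt) : Continuous (polyCurve n p) := by
  unfold polyCurve
  fun_prop

theorem polyCurve_eq (n : ℕ) (p : ℕ → Pt) (k : ℕ) (hk : k < n) (t : ℝ)
    (h1 : (k:ℝ) ≤ n * t) (h2 : (n:ℝ) * t ≤ k + 1) :
    polyCurve n p t = AffineMap.lineMap (p k) (p (k+1)) ((n:ℝ) * t - k) := by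
  unfold polyCurve
  obtain ⟨m, rfl⟩ := Nat.exists_eq_add_of_lt hk
  rw [show k + m + 1 = (k + 1) + m by ring, Finset.sum_range_add, Finset.sum_range_succ]
  rw [show (k + m + 1 : ℕ) = ((k + 1) + m : ℕ) by ring] at h1 h2
  set N : ℝ := ((k + 1 + m : ℕ) : ℝ)
  have e1 : ∑ i ∈ Finset.range k, (max 0 (min 1 (N * t - i))) • (p (i+1) - p i)
      = p k - p 0 := by
    rw [← Finset.sum_range_sub]
    apply Finset.sum_congr rfl
    intro i hi
    have hi' : (i:ℝ) + 1 ≤ k := by exact_mod_cast Finset.mem_range.1 hi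
    rw [min_eq_left (by linarith), max_eq_right (by norm_num), one_smul]
  have e2 : ∑ i ∈ Finset.range m, (max 0 (min 1 (N * t - ((k+1+i:ℕ):ℝ)))) •
      (p (k+1+i+1) - p (k+1+i)) = 0 := by
    apply Finset.sum_eq_zero
    intro i hi
    have : N * t - ((k+1+i:ℕ):ℝ) ≤ 0 := by
      push_cast
      have : (0:ℝ) ≤ i := Nat.cast_nonneg _
      linarith
    rw [max_eq_left ((min_le_right _ _).trans this), zero_smul]
  rw [e1, e2, min_eq_right (by linarith), max_eq_right (by linarith), AffineMap.lineMap_apply]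
  simp only [vsub_eq_sub, vadd_eq_add]
  abel

theorem closed_sum (Ω : Set Pt) (A : Pt → Pt) (hA : ContinuousOn A Ω)
    (hcirc : ∀ γ : ℝ → Pt, IsPiecewiseC1LoopIn Ω γ →
      ∃ m : ℤ, circulation A γ = Real.pi * m)
    (n : ℕ) (p : ℕ → Pt) (hp : p 0 = p n)
    (hseg : ∀ i < n, segment ℝ (p i) (p (i+1)) ⊆ Ω) :
    ∃ m : ℤ, ∑ i ∈ Finset.range n, segI A (p i) (p (i+1)) = Real.pi * m := by
  rcases Nat.eq_zero_or_pos n with rfl | hn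
  · exact ⟨0, by simp⟩
  have hn' : (0:ℝ) < n := by exact_mod_cast hn
  set γ := polyCurve n p with hγ
  have hle : ∀ k : ℕ, (k:ℝ) / n ≤ ((k+1 : ℕ):ℝ) / n := by
    intro k; gcongr; simp
  have heq : ∀ k < n, ∀ t ∈ Icc ((k:ℝ)/n) (((k+1:ℕ):ℝ)/n),
      γ t = AffineMap.lineMap (p k) (p (k+1)) ((n:ℝ) * t - k) := by
    intro k hk t ht
    apply polyCurve_eq n p k hk t
    · have := ht.1; rw [div_le_iff₀ hn'] at this; linarith
    · have := ht.2; rw [le_div_iff₀ hn'] at this; push_cast at this; linarith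
  have hmem : ∀ k < n, ∀ t ∈ Icc ((k:ℝ)/n) (((k+1:ℕ):ℝ)/n), (n:ℝ) * t - k ∈ Icc (0:ℝ) 1 := by
    intro k hk t ht
    constructor
    · have := ht.1; rw [div_le_iff₀ hn'] at this; linarith
    · have := ht.2; rw [le_div_iff₀ hn'] at this; push_cast at this; linarith
  have hloop : IsPiecewiseC1LoopIn Ω γ := by
    refine ⟨(polyCurve_continuous n p).continuousOn, ?_, ?_, n, fun i => (i:ℕ) / (n:ℝ), ?_, ?_, ?_, ?_⟩
    · rw [heq 0 hn 0 (by constructor <;> simp), heq (n-1) (by omega) 1 ?_]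
      · rw [Nat.sub_add_cancel hn, Nat.cast_sub hn]
        simp [hp]
      · rw [Nat.sub_add_cancel hn, Nat.cast_sub hn, div_self hn'.ne']
        constructor
        · rw [div_le_one hn']; simp
        · exact le_rfl
    · intro t ht
      obtain ⟨k, hk, hkt⟩ : ∃ k < n, t ∈ Icc ((k:ℝ)/n) (((k+1:ℕ):ℝ)/n) := by
        rcases eq_or_lt_of_le ht.2 with rfl | h1
        · refine ⟨n-1, by omega, ?_⟩
          rw [Nat.sub_add_cancel hn, Nat.cast_sub hn, div_self hn'.ne']
          constructor
          · rw [div_le_one hn']; simp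
          · exact le_rfl
        · have h0 : 0 ≤ (n:ℝ) * t := mul_nonneg hn'.le ht.1
          refine ⟨⌊(n:ℝ) * t⌋₊, ?_, ?_, ?_⟩
          · rw [Nat.floor_lt h0]; nlinarith
          · rw [div_le_iff₀ hn', mul_comm t]; exact Nat.floor_le h0
          · rw [le_div_iff₀ hn', mul_comm t]; push_cast; exact (Nat.lt_floor_add_one _).le
      rw [heq k hk t hkt]
      apply hseg k hk
      rw [segment_eq_image_lineMap]
      exact mem_image_of_mem _ (hmem k hk t hkt)
    · intro i j hij
      have : ((i:ℕ):ℝ) < (j:ℕ) := by exact_mod_cast hij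
      show ((i:ℕ):ℝ) / n < (j:ℕ) / n
      gcongr
    · simp
    · simp [hn'.ne']
    · intro i
      refine ContDiffOn.congr (f := fun t : ℝ =>
        AffineMap.lineMap (p i) (p (i+1)) ((n:ℝ) * t - (i:ℕ))) ?_ ?_
      · simp only [AffineMap.lineMap_apply, vsub_eq_sub, vadd_eq_add]
        fun_prop
      · intro t ht
        exact heq i i.2 t (by simpa using ht)
  obtain ⟨m, hm⟩ := hcirc γ hloop
  refine ⟨m, ?_⟩
  rw [← hm]
  unfold circulation
  set f : ℝ → ℝ := fun t => (A (γ t)).1 * (deriv γ t).1 + (A (γ t)).2 * (deriv γ t).2 with hf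
  set g : ℕ → ℝ → ℝ := fun k t => formOf A (AffineMap.lineMap (p k) (p (k+1)) t) (p (k+1) - p k)
    with hg
  have hfg : ∀ k < n, EqOn f (fun t => (n:ℝ) * g k ((n:ℝ) * t - k))
      (Ioo ((k:ℝ)/n) (((k+1:ℕ):ℝ)/n)) := by
    intro k hk t ht
    have hd : HasDerivAt γ ((n:ℝ) • (p (k+1) - p k)) t := by
      have h1 : HasDerivAt (fun t : ℝ => (n:ℝ) * t - k) (n:ℝ) t := by
        simpa using ((hasDerivAt_id t).const_mul (n:ℝ)).sub_const (k:ℝ)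
      have h2 : HasDerivAt (fun t : ℝ => p k + ((n:ℝ) * t - k) • (p (k+1) - p k))
          ((n:ℝ) • (p (k+1) - p k)) t := (h1.smul_const _).const_add _
      refine h2.congr_of_eventuallyEq ?_
      filter_upwards [isOpen_Ioo.mem_nhds ht] with u hu
      rw [heq k hk u (Ioo_subset_Icc_self hu), AffineMap.lineMap_apply]
      simp only [vsub_eq_sub, vadd_eq_add]
      abel
    simp only [hf, hg]
    rw [hd.deriv, heq k hk t (Ioo_subset_Icc_self ht)]
    simp [formOf]
    ring
  have hgc : ∀ k < n, ContinuousOn (g k) (Icc 0 1) := by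
    intro k hk
    have h1 : ContinuousOn (fun t : ℝ => A (AffineMap.lineMap (p k) (p (k+1)) t)) (Icc 0 1) := by
      refine hA.comp (AffineMap.lineMap_continuous).continuousOn ?_
      intro t ht
      apply hseg k hk
      rw [segment_eq_image_lineMap]
      exact mem_image_of_mem _ ht
    simp only [hg, formOf]
    simp only [ContinuousLinearMap.add_apply, ContinuousLinearMap.smul_apply]
    exact (h1.fst.smul continuousOn_const).add (h1.snd.smul continuousOn_const)
  have hint : ∀ k < n, IntervalIntegrable f volume ((k:ℝ)/n) (((k+1:ℕ):ℝ)/n) := by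
    intro k hk
    have hc : ContinuousOn (fun t => (n:ℝ) * g k ((n:ℝ) * t - k))
        (Icc ((k:ℝ)/n) (((k+1:ℕ):ℝ)/n)) := by
      refine continuousOn_const.mul ((hgc k hk).comp (by fun_prop) ?_)
      intro t ht
      exact hmem k hk t ht
    have h1 := hc.intervalIntegrable_of_Icc (μ := volume) (hle k)
    rw [intervalIntegrable_iff_integrableOn_Ioo_of_le (hle k)] at h1 ⊢
    exact h1.congr_fun (hfg k hk).symm measurableSet_Ioo
  have := intervalIntegral.sum_integral_adjacent_intervals (a := fun k : ℕ => (k:ℝ)/n) hint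
  simp only [Nat.cast_zero, zero_div, div_self hn'.ne'] at this
  rw [← this]
  apply Finset.sum_congr rfl
  intro k hk
  have hk := Finset.mem_range.1 hk
  rw [intervalIntegral.integral_congr_Ioo_of_le (hle k) (hfg k hk), segI_eq,
    intervalIntegral.integral_const_mul, ← smul_eq_mul,
    intervalIntegral.smul_integral_comp_mul_sub]
  congr 1
  · field_simp; simp
  · field_simp; push_cast; ring

theorem formOf_continuousOn {Ω : Set Pt} {A : Pt → Pt} (hA : ContinuousOn A Ω) :
    ContinuousOn (formOf A) Ω :=
  (hA.fst.smul continuousOn_const).add (hA.snd.smul continuousOn_const)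

/-- If `A` is a `C¹` curl-free vector field on an open connected `Ω ⊂ ℝ²` all of whose
loop circulations lie in `πℤ`, then there is a `C¹` function `σ : Ω → ℂ` with `|σ| = 1`
and `∂_j σ = 2iσA_j` on `Ω` (the single-valued `e^{iφ}` with `dφ = 2ω_A`). -/
theorem statement19 (Ω : Set Pt) (hΩo : IsOpen Ω) (hΩc : IsConnected Ω)
    (A : Pt → Pt) (hA : ContDiffOn ℝ 1 A Ω)
    (hrot : ∀ x ∈ Ω, rot2 A x = 0)
    (hcirc : ∀ γ : ℝ → Pt, IsPiecewiseC1LoopIn Ω γ →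
      ∃ m : ℤ, circulation A γ = Real.pi * m) :
    ∃ σ : Pt → ℂ, ContDiffOn ℝ 1 σ Ω ∧ (∀ x ∈ Ω, ‖σ x‖ = 1) ∧
      (∀ x ∈ Ω, pd1 σ x = 2 * Complex.I * σ x * ((A x).1 : ℂ)) ∧
      (∀ x ∈ Ω, pd2 σ x = 2 * Complex.I * σ x * ((A x).2 : ℂ)) := by
  classical
  obtain ⟨x₀, hx₀⟩ := hΩc.nonempty
  have hAc := hA.continuousOn
  have hball : ∀ x ∈ Ω, ∃ r > 0, Metric.ball x r ⊆ Ω := fun x hx =>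
    Metric.isOpen_iff.1 hΩo x hx
  have hsegb : ∀ x r, Metric.ball x r ⊆ Ω → ∀ y ∈ Metric.ball x r, segment ℝ x y ⊆ Ω := by
    intro x r h y hy
    have hr : 0 < r := dist_nonneg.trans_lt hy
    exact ((convex_ball x r).segment_subset (Metric.mem_ball_self hr) hy).trans h
  have hclosed : ∀ x s, PChain Ω A x x s → ∃ m : ℤ, s = Real.pi * m := by
    intro x s h
    obtain ⟨n, p, h0, h1, h2, rfl⟩ := h.exists_seq
    exact closed_sum Ω A hAc hcirc n p (h0.trans h1.symm) h2
  have hreach : ∀ x ∈ Ω, ∃ s, PChain Ω A x₀ x s := by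
    set U : Set Pt := {x | x ∈ Ω ∧ ∃ s, PChain Ω A x₀ x s} with hU
    have : Ω ⊆ U := by
      refine hΩc.isPreconnected.subset_of_closure_inter_subset ?_ ⟨x₀, hx₀, hx₀, 0, .nil⟩ ?_
      · rw [Metric.isOpen_iff]
        rintro x ⟨hx, s, hs⟩
        obtain ⟨r, hr, hb⟩ := hball x hx
        exact ⟨r, hr, fun y hy => ⟨hb hy, _, hs.snoc (hsegb x r hb y hy)⟩⟩
      · rintro x ⟨hxc, hx⟩
        obtain ⟨r, hr, hb⟩ := hball x hx
        obtain ⟨y, ⟨hy, s, hs⟩, hxy⟩ := Metric.mem_closure_iff.1 hxc r hr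
        refine ⟨hx, _, hs.snoc (z := x) ?_⟩
        rw [segment_symm]
        exact hsegb x r hb y (by rwa [Metric.mem_ball, dist_comm])
    exact fun x hx => (this hx).2
  choose! φ hφ using hreach
  set σ : Pt → ℂ := fun x => Complex.exp (((2 * φ x : ℝ) : ℂ) * Complex.I) with hσ
  have hloc : ∀ x ∈ Ω, ∀ y ∈ Ω, segment ℝ x y ⊆ Ω →
      σ y = σ x * Complex.exp (((2 * segI A x y : ℝ) : ℂ) * Complex.I) := by
    intro x hx y hy hxy
    obtain ⟨m, hm⟩ := hclosed _ _ (((hφ x hx).snoc hxy).trans (hφ y hy).symm)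
    have e : φ y = φ x + segI A x y - Real.pi * m := by linarith
    simp only [hσ]
    rw [← Complex.exp_add, Complex.exp_eq_exp_iff_exists_int]
    refine ⟨-m, ?_⟩
    rw [e]
    push_cast
    ring
  have hder : ∀ x ∈ Ω, HasFDerivAt σ
      ((2 * Complex.I * σ x) • (Complex.ofRealCLM.comp (formOf A x))) x := by
    intro x hx
    have h1 : HasFDerivAt (fun y => segI A x y) (formOf A x) x := by
      refine HasFDerivAt.curveIntegral_segment_source' ?_
      filter_upwards [hΩo.mem_nhds hx] with z hz
      exact (formOf_continuousOn hAc).continuousAt (hΩo.mem_nhds hz)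
    have h0 : segI A x x = 0 := by simp [segI_eq]
    have h2 : HasFDerivAt (fun y => ((2 * segI A x y : ℝ) : ℂ) * Complex.I)
        ((2 * Complex.I) • (Complex.ofRealCLM.comp (formOf A x))) x := by
      have := ((Complex.ofRealCLM.hasFDerivAt.comp x h1).const_mul (2 * Complex.I))
      refine this.congr_of_eventuallyEq (Filter.Eventually.of_forall fun y => ?_)
      simp only [Function.comp, Complex.ofRealCLM_apply]
      push_cast
      ring
    have h3 := (h2.cexp).const_mul (σ x)
    have h4 : HasFDerivAt σ _ x := h3.congr_of_eventuallyEq (by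
      obtain ⟨r, hr, hb⟩ := hball x hx
      filter_upwards [Metric.ball_mem_nhds x hr] with y hy
      exact hloc x hx y (hb hy) (hsegb x r hb y hy))
    refine h4.congr_fderiv ?_
    ext <;> simp [h0] <;> ring
  have hσc : ContinuousOn σ Ω := fun x hx => (hder x hx).continuousAt.continuousWithinAt
  refine ⟨σ, ?_, ?_, ?_, ?_⟩
  · rw [show (1 : WithTop ℕ∞) = 0 + 1 by simp, contDiffOn_succ_iff_fderiv_of_isOpen hΩo, contDiffOn_zero]
    refine ⟨fun x hx => (hder x hx).differentiableAt.differentiableWithinAt, by simp, ?_⟩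
    refine ContinuousOn.congr (f := fun x =>
      (2 * Complex.I * σ x) • (Complex.ofRealCLM.comp (formOf A x))) ?_
      (fun x hx => (hder x hx).fderiv)
    exact (continuousOn_const.mul hσc).smul
      (continuousOn_const.clm_comp (formOf_continuousOn hAc))
  · intro x _
    exact Complex.norm_exp_ofReal_mul_I _
  · intro x hx
    rw [pd1, (hder x hx).fderiv]
    simp [formOf]
  · intro x hx
    rw [pd2, (hder x hx).fderiv]
    simp [formOf]
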